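/- Normal form for Euler vector fields (Proposition 2.5): let X be an Euler vector field on an open set U ⊆ ℝ^d × ℝ^d and let p ∈ Δ ∩ U. Then there exist an open set V with p ∈ V ⊆ U and a smooth map h̃ : V → ℝ^d such that: (i) the map Ψ : V → ℝ^d × ℝ^d, Ψ(x₁, x₂) = (x₁, h̃(x₁, x₂)), is a smooth diffeomorphism from V onto an open subset of ℝ^d × ℝ^d (injective, with open image and smooth inverse); (ii) Δ ∩ V = {q ∈ V : h̃(q) = 0}; and (iii) X h̃ⁱ = h̃ⁱ on V for each component, i.e. D h̃(q)(X(q)) = h̃(q) for all q ∈ V. In these coordinates X takes the normal form X = Σᵢ hⁱ ∂_{hⁱ}. -/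

import Mathlib

open Set

noncomputable section

/-- Points of `ℝ^d × ℝ^d`. -/
abbrev Pt (d : ℕ) := EuclideanSpace ℝ (Fin d) × EuclideanSpace ℝ (Fin d)

/-- The diagonal `Δ = {(x,x)}` in `ℝ^d × ℝ^d`. -/
def Diag (d : ℕ) : Set (Pt d) := {p | p.1 = p.2}

/-- The action `Xf : q ↦ Df(q)(X(q))` of a vector field on a function. -/
def vfApply {d : ℕ} (X : Pt d → Pt d) (f : Pt d → ℝ) : Pt d → ℝ :=
  fun q => fderiv ℝ f q (X q)

/-- `g` vanishes to order `m` on `Δ ∩ U`: all iterated Fréchet derivatives of order `< m`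
vanish at every point of `Δ ∩ U`. -/
def VanishesToOrder {d : ℕ} (m : ℕ) (g : Pt d → ℝ) (U : Set (Pt d)) : Prop :=
  ∀ k < m, ∀ p ∈ Diag d ∩ U, iteratedFDeriv ℝ k g p = 0

/-- `X` is an Euler vector field on the open set `U ⊆ ℝ^d × ℝ^d`: it is smooth, its first
`d` components vanish identically, and for every smooth `f` vanishing on `Δ ∩ U` the
function `Xf − f` vanishes to order `2` on `Δ ∩ U`. -/
structure IsEulerVF {d : ℕ} (X : Pt d → Pt d) (U : Set (Pt d)) : Prop where
  smooth : ContDiffOn ℝ (⊤ : ℕ∞) X U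
  fiber : ∀ q ∈ U, (X q).1 = 0
  euler : ∀ f : Pt d → ℝ, ContDiffOn ℝ (⊤ : ℕ∞) f U → (∀ p ∈ Diag d ∩ U, f p = 0) →
    VanishesToOrder 2 (fun q => vfApply X f q - f q) U

/-!
In the coordinates `(x, v) = (x, y - x)` the Euler condition says that `X = (v + R (x, v)) ∂_v`
with `R` vanishing to second order at `v = 0`. Let `u` solve `u' = t⁻² R (x, t u)`, `u 0 = w` on
`[0, 1]`, and set `g (x, w) = u 1`. Since `t ↦ l u (l t)` solves the same equation with initial
value `l w`, uniqueness gives `g (x, l w) = l u l`; differentiating at `l = 1` yields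
`D g (x, w) (0, w) = g + R (x, g)`, so that `(x, w) ↦ (x, x + g (x, w))` carries the field `w ∂_w`
to `X`, and `htil` is the fibre component of its inverse.

By Hadamard's lemma `R (x, v) = B (x, v) v v` with `B` smooth, so the equation reads
`u' = B (x, t u) u u` and is regular at `t = 0`. Its solution is a fixed point of the Picard
operator on the Banach space `C([0, 1], E)`, which is smooth because superposition operators with
smooth symbol are; the inverse function theorem then shows that the solution depends smoothly on
`(x, w)`.
-/

namespace EulerNormalForm

open Metric unitInterval ContinuousLinearMap
open scoped ContDiff Topology

universe u

section Superposition

variable {K X Y : Type*} [TopologicalSpace K] [TopologicalSpace X] [TopologicalSpace Y]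
  {f : X → Y} {Ω : Set X}

/-- The superposition (Nemytskii) operator `v ↦ f ∘ v` on continuous functions. It takes the junk
value `0` at those `v` for which `f ∘ v` is not continuous. -/
def nemytskii [Zero Y] (f : X → Y) (v : C(K, X)) : C(K, Y) := ContinuousMap.mkD (f ∘ v) 0

lemma nemytskii_apply [Zero Y] (hf : ContinuousOn f Ω) {v : C(K, X)} (hv : ∀ t, v t ∈ Ω) (t : K) :
    nemytskii f v t = f (v t) :=
  ContinuousMap.mkD_apply_of_continuous (hf.comp_continuous v.continuous hv)

lemma isOpen_setOf_forall_mem [CompactSpace K] (hΩ : IsOpen Ω) :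
    IsOpen {v : C(K, X) | ∀ t, v t ∈ Ω} := by
  simpa [MapsTo] using ContinuousMap.isOpen_setOfPred_mapsTo (X := K) isCompact_univ hΩ

end Superposition

section UniformContinuity

variable {K X Y : Type*} [TopologicalSpace K] [CompactSpace K] [PseudoMetricSpace X]
  {f : X → Y} {Ω : Set X}

lemma exists_pos_forall_ball_of_isCompact [PseudoMetricSpace Y] {s : Set X} (hs : IsCompact s)
    (hΩ : IsOpen Ω) (hsΩ : s ⊆ Ω) (hf : ContinuousOn f Ω) {c : ℝ} (hc : 0 < c) :
    ∃ δ > 0, ∀ x ∈ s, ball x δ ⊆ Ω ∧ ∀ y ∈ ball x δ, dist (f y) (f x) < c := by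
  obtain ⟨ρ, hρ, hρΩ⟩ := hs.exists_thickening_subset_open hΩ hsΩ
  obtain ⟨η, hη, hηf⟩ := Metric.mem_uniformity_dist.1 <|
    hs.uniformContinuousAt_of_continuousAt f
      (fun x hx => hf.continuousAt (hΩ.mem_nhds (hsΩ hx))) (Metric.dist_mem_uniformity hc)
  refine ⟨min ρ η, lt_min hρ hη, fun x hx => ⟨fun y hy => hρΩ ?_, fun y hy => ?_⟩⟩
  · exact mem_thickening_iff.2 ⟨x, hx, hy.trans_le (min_le_left _ _)⟩
  · rw [dist_comm]
    exact hηf (by rw [dist_comm]; exact hy.trans_le (min_le_right _ _)) hx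

lemma continuousOn_nemytskii [PseudoMetricSpace Y] [Zero Y] (hΩ : IsOpen Ω)
    (hf : ContinuousOn f Ω) : ContinuousOn (nemytskii f) {v : C(K, X) | ∀ t, v t ∈ Ω} := by
  intro v hv
  refine ContinuousAt.continuousWithinAt (Metric.continuousAt_iff.2 fun c hc => ?_)
  obtain ⟨δ, hδ, hball⟩ := exists_pos_forall_ball_of_isCompact (isCompact_range v.continuous) hΩ
    (range_subset_iff.2 hv) hf (half_pos hc)
  refine ⟨δ, hδ, fun {w} hw => ?_⟩
  have hwv : ∀ t, w t ∈ ball (v t) δ := fun t =>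
    (ContinuousMap.dist_apply_le_dist t).trans_lt hw
  have hwΩ : ∀ t, w t ∈ Ω := fun t => (hball _ (mem_range_self t)).1 (hwv t)
  refine ((ContinuousMap.dist_le (half_pos hc).le).2 fun t => ?_).trans_lt (half_lt_self hc)
  rw [nemytskii_apply hf hwΩ, nemytskii_apply hf hv]
  exact ((hball _ (mem_range_self t)).2 _ (hwv t)).le

end UniformContinuity

section Differentiability

variable {K : Type*} [TopologicalSpace K] [CompactSpace K]
  {E F : Type u} [NormedAddCommGroup E] [NormedSpace ℝ E] [NormedAddCommGroup F] [NormedSpace ℝ F]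
  {f : E → F} {Ω : Set E}

variable (K E F) in
/-- The pointwise application `A ↦ (h ↦ (t ↦ A t (h t)))` of continuous families of operators to
continuous families of vectors. -/
def pointwiseApply :
    C(K, E →L[ℝ] F) →L[ℝ] C(K, E) →L[ℝ] C(K, F) :=
  LinearMap.mkContinuous₂
    (LinearMap.mk₂ ℝ (fun (A : C(K, E →L[ℝ] F)) (h : C(K, E)) =>
        (⟨fun t => A t (h t), by fun_prop⟩ : C(K, F)))
      (fun _ _ _ => rfl) (fun _ _ _ => rfl)
      (fun A h₁ h₂ => ContinuousMap.ext fun t => map_add (A t) (h₁ t) (h₂ t))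
      (fun c A h => ContinuousMap.ext fun t => map_smul (A t) c (h t))) 1
    (fun A h => by
      rw [one_mul, ContinuousMap.norm_le _ (by positivity)]
      exact fun t => (A t).le_of_opNorm_le_of_le (A.norm_coe_le_norm t) (h.norm_coe_le_norm t))

@[simp]
lemma pointwiseApply_apply (A : C(K, E →L[ℝ] F)) (h : C(K, E)) (t : K) :
    pointwiseApply K E F A h t = A t (h t) := rfl

lemma hasFDerivAt_nemytskii (hΩ : IsOpen Ω) (hf : ContDiffOn ℝ 1 f Ω) {v : C(K, E)}
    (hv : ∀ t, v t ∈ Ω) :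
    HasFDerivAt (nemytskii f) (pointwiseApply K E F (nemytskii (fderiv ℝ f) v)) v := by
  have hf' : ContinuousOn (fderiv ℝ f) Ω := hf.continuousOn_fderiv_of_isOpen hΩ le_rfl
  rw [hasFDerivAt_iff_isLittleO, Asymptotics.isLittleO_iff]
  intro c hc
  obtain ⟨δ, hδ, hball⟩ := exists_pos_forall_ball_of_isCompact (isCompact_range v.continuous) hΩ
    (range_subset_iff.2 hv) hf' hc
  filter_upwards [ball_mem_nhds v hδ] with w hw
  have hwv : ∀ t, w t ∈ ball (v t) δ := fun t =>
    (ContinuousMap.dist_apply_le_dist t).trans_lt hw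
  have hwΩ : ∀ t, w t ∈ Ω := fun t => (hball _ (mem_range_self t)).1 (hwv t)
  rw [ContinuousMap.norm_le _ (by positivity)]
  intro t
  obtain ⟨hballΩ, hballf'⟩ := hball _ (mem_range_self t)
  have mean_value : ‖f (w t) - f (v t) - fderiv ℝ f (v t) (w t - v t)‖ ≤ c * ‖w t - v t‖ :=
    (convex_ball (v t) δ).norm_image_sub_le_of_norm_hasFDerivWithin_le'
      (fun x hx => (hf.differentiableOn one_ne_zero |>.hasFDerivAt
        (hΩ.mem_nhds (hballΩ hx))).hasFDerivWithinAt)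
      (fun x hx => by rw [← dist_eq_norm]; exact (hballf' x hx).le) (mem_ball_self hδ) (hwv t)
  calc ‖(nemytskii f w - nemytskii f v -
        pointwiseApply K E F (nemytskii (fderiv ℝ f) v) (w - v)) t‖
      = ‖f (w t) - f (v t) - fderiv ℝ f (v t) (w t - v t)‖ := by
        simp [nemytskii_apply hf.continuousOn hwΩ, nemytskii_apply hf.continuousOn hv,
          nemytskii_apply hf' hv]
    _ ≤ c * ‖w t - v t‖ := mean_value
    _ ≤ c * ‖w - v‖ := by gcongr; exact (w - v).norm_coe_le_norm t

lemma contDiffOn_nemytskii_nat (n : ℕ) : ∀ {F : Type u} [NormedAddCommGroup F] [NormedSpace ℝ F]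
    {f : E → F}, IsOpen Ω → ContDiffOn ℝ n f Ω →
      ContDiffOn ℝ n (nemytskii f) {v : C(K, E) | ∀ t, v t ∈ Ω} := by
  induction n with
  | zero =>
    intro F _ _ f hΩ hf
    exact contDiffOn_zero.2 (continuousOn_nemytskii hΩ (contDiffOn_zero.1 hf))
  | succ n ih =>
    intro F _ _ f hΩ hf
    have hderiv : ∀ v ∈ {v : C(K, E) | ∀ t, v t ∈ Ω}, HasFDerivAt (nemytskii f)
        (pointwiseApply K E F (nemytskii (fderiv ℝ f) v)) v :=
      fun v hv => hasFDerivAt_nemytskii hΩ (hf.of_le (by simp)) hv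
    push_cast at hf ⊢
    refine (contDiffOn_succ_iff_fderiv_of_isOpen (isOpen_setOf_forall_mem hΩ)).2
      ⟨fun v hv => (hderiv v hv).differentiableAt.differentiableWithinAt, by simp, ?_⟩
    refine ContDiffOn.congr ?_ fun v hv => (hderiv v hv).fderiv
    exact (pointwiseApply K E F).contDiff.comp_contDiffOn
      (ih hΩ ((contDiffOn_succ_iff_fderiv_of_isOpen hΩ).1 hf).2.2)

lemma contDiffOn_nemytskii {n : ℕ∞} (hΩ : IsOpen Ω) (hf : ContDiffOn ℝ n f Ω) :
    ContDiffOn ℝ n (nemytskii f) {v : C(K, E) | ∀ t, v t ∈ Ω} :=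
  contDiffOn_iff_forall_nat_le.2 fun m hm =>
    contDiffOn_nemytskii_nat m hΩ (hf.of_le (mod_cast hm))

end Differentiability

section Primitive

variable {E : Type*} [NormedAddCommGroup E] [NormedSpace ℝ E]

/-- The primitive `t ↦ ∫ s in 0..t, v s` of a continuous function on the unit interval, as a
continuous linear operator. The integrand is extended to `ℝ` by its values at the endpoints. -/
def primitive : C(I, E) →L[ℝ] C(I, E) :=
  LinearMap.mkContinuous
    { toFun := fun v => ⟨fun t => ∫ s in (0 : ℝ)..t, IccExtend (zero_le_one' ℝ) v s,
        (intervalIntegral.continuous_primitive (fun _ _ =>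
          v.continuous.Icc_extend'.intervalIntegrable _ _) 0).comp
            continuous_subtype_val⟩
      map_add' := fun v w => ContinuousMap.ext fun t => intervalIntegral.integral_add
        (v.continuous.Icc_extend'.intervalIntegrable _ _)
        (w.continuous.Icc_extend'.intervalIntegrable _ _)
      map_smul' := fun c v => ContinuousMap.ext fun t => intervalIntegral.integral_smul c _ } 1
    (fun v => by
      refine (ContinuousMap.norm_le _ (by positivity)).2 fun t => ?_
      refine (intervalIntegral.norm_integral_le_of_norm_le_const fun s _ =>
        v.norm_coe_le_norm (projIcc 0 1 zero_le_one s)).trans ?_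
      rw [sub_zero, abs_of_nonneg t.2.1, mul_comm]
      gcongr
      exact t.2.2)

lemma primitive_apply (v : C(I, E)) (t : I) :
    primitive v t = ∫ s in (0 : ℝ)..t, IccExtend (zero_le_one' ℝ) v s := rfl

lemma primitive_comp_mul (l : I) (v : C(I, E)) (t : I) :
    primitive v (l * t) = (l : ℝ) • primitive (v.comp ⟨(l * ·), by fun_prop⟩) t := by
  have change_of_variables := intervalIntegral.smul_integral_comp_mul_left (a := 0) (b := (t : ℝ))
    (IccExtend (zero_le_one' ℝ) v) l
  rw [mul_zero] at change_of_variables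
  rw [primitive_apply, primitive_apply, Icc.coe_mul, ← change_of_variables]
  congr 1
  refine intervalIntegral.integral_congr fun s hs => ?_
  rw [uIcc_of_le t.2.1] at hs
  have hsI : s ∈ I := ⟨hs.1, hs.2.trans t.2.2⟩
  have hlsI : (l : ℝ) * s ∈ I := (l * ⟨s, hsI⟩ : I).2
  rw [IccExtend_of_mem _ _ hsI, IccExtend_of_mem _ _ hlsI]
  rfl

end Primitive

section ParametricIntegral

/-- The graph `t ↦ (t, v t)` of a path `v`; superposition along graphs handles
time-dependent integrands. -/
def timeGraph {X : Type*} [TopologicalSpace X] (v : C(I, X)) : C(I, ℝ × X) :=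
  ⟨fun t => (t, v t), by fun_prop⟩

@[simp]
lemma timeGraph_apply {X : Type*} [TopologicalSpace X] (v : C(I, X)) (t : I) :
    timeGraph v t = ((t : ℝ), v t) := rfl

variable {E F : Type u} [NormedAddCommGroup E] [NormedSpace ℝ E]
  [NormedAddCommGroup F] [NormedSpace ℝ F] {n : ℕ∞}

lemma contDiff_timeGraph {n : WithTop ℕ∞} : ContDiff ℝ n (timeGraph (X := E)) := by
  have affine : timeGraph (X := E) =
      fun v => timeGraph 0 + (inr ℝ ℝ E).compLeftContinuous ℝ I v := by
    ext v t <;> simp [ContinuousLinearMap.compLeftContinuous]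
  rw [affine]
  exact contDiff_const.add (ContinuousLinearMap.contDiff _)

lemma contDiffOn_nemytskii_timeGraph {φ : ℝ × E → F} {Ω : Set (ℝ × E)} (hΩ : IsOpen Ω)
    (hφ : ContDiffOn ℝ n φ Ω) :
    ContDiffOn ℝ n (fun v : C(I, E) => nemytskii φ (timeGraph v))
      {v | ∀ t : I, ((t : ℝ), v t) ∈ Ω} :=
  (contDiffOn_nemytskii hΩ hφ).comp contDiff_timeGraph.contDiffOn fun _ hv => hv

lemma contDiffOn_integral_unitInterval {φ : ℝ × E → F} {Ω : Set (ℝ × E)} (hΩ : IsOpen Ω)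
    (hφ : ContDiffOn ℝ n φ Ω) :
    ContDiffOn ℝ n (fun z => ∫ t in (0 : ℝ)..1, φ (t, z)) {z | ∀ t ∈ I, (t, z) ∈ Ω} := by
  let eval_primitive : C(I, F) →L[ℝ] F := (ContinuousMap.evalCLM ℝ 1).comp primitive
  let constant : E →L[ℝ] C(I, E) := .const ℝ I
  have smooth : ContDiffOn ℝ n
      (fun z => eval_primitive (nemytskii φ (timeGraph (constant z))))
      {z | ∀ t ∈ I, (t, z) ∈ Ω} :=
    eval_primitive.contDiff.comp_contDiffOn <| (contDiffOn_nemytskii_timeGraph hΩ hφ).comp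
      constant.contDiff.contDiffOn fun z hz t => hz t t.2
  refine smooth.congr fun z hz => intervalIntegral.integral_congr fun t ht => ?_
  rw [uIcc_of_le zero_le_one] at ht
  simp only [IccExtend_of_mem _ _ ht]
  exact (nemytskii_apply hφ.continuousOn (v := timeGraph (constant z))
    (fun s => hz s s.2) ⟨t, ht⟩).symm

end ParametricIntegral

section FiberScale

variable {E G : Type*} [NormedAddCommGroup E] [NormedSpace ℝ E]
  [NormedAddCommGroup G] [NormedSpace ℝ G]

/-- The homothety `(t, (x, v)) ↦ (x, t • v)` of the fibres of the projection `(x, v) ↦ x`. -/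
def fiberScale (q : ℝ × (E × G)) : E × G := (q.2.1, q.1 • q.2.2)

lemma contDiff_fiberScale {n : WithTop ℕ∞} : ContDiff ℝ n (fiberScale (E := E) (G := G)) := by
  unfold fiberScale
  fun_prop

lemma hasDerivAt_prodMk_smul (x : E) (v : G) (t : ℝ) :
    HasDerivAt (fun t : ℝ => (x, t • v)) (0, v) t := by
  simpa using (hasDerivAt_const t x).prodMk ((hasDerivAt_id t).smul_const v)

lemma prodMk_smul_mem_ball {X : Type*} [PseudoMetricSpace X] {x₀ : X} {r : ℝ} {z : X × G}
    (hz : z ∈ ball (x₀, 0) r) {t : ℝ} (ht : t ∈ I) : (z.1, t • z.2) ∈ ball (x₀, 0) r := by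
  rw [← ball_prod_same, mem_prod, mem_ball_zero_iff] at hz ⊢
  refine ⟨hz.1, lt_of_le_of_lt ?_ hz.2⟩
  rw [norm_smul, Real.norm_of_nonneg ht.1]
  exact mul_le_of_le_one_left (norm_nonneg _) ht.2

end FiberScale

section Hadamard

variable {E F G : Type u} [NormedAddCommGroup E] [NormedSpace ℝ E]
  [NormedAddCommGroup F] [NormedSpace ℝ F] [NormedAddCommGroup G] [NormedSpace ℝ G]
  {f : E × G → F} {Ω : Set (E × G)}

lemma eq_integral_fderiv_comp_inr_apply [CompleteSpace F] (hΩ : IsOpen Ω)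
    (hΩ_star : ∀ x, StarConvex ℝ 0 (Prod.mk x ⁻¹' Ω)) (hf : ContDiffOn ℝ 1 f Ω)
    (hf₀ : ∀ x, (x, 0) ∈ Ω → f (x, 0) = 0) {z : E × G} (hz : z ∈ Ω) :
    f z = (∫ t in (0 : ℝ)..1, (fderiv ℝ f (z.1, t • z.2)).comp (inr ℝ E G)) z.2 := by
  have segment_mem : ∀ t ∈ uIcc (0 : ℝ) 1, (z.1, t • z.2) ∈ Ω := fun t ht => by
    rw [uIcc_of_le zero_le_one] at ht
    exact (hΩ_star z.1).smul_mem hz ht.1 ht.2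
  have integrand_cont : ContinuousOn
      (fun t : ℝ => (fderiv ℝ f (z.1, t • z.2)).comp (inr ℝ E G)) (uIcc 0 1) :=
    ((hf.continuousOn_fderiv_of_isOpen hΩ le_rfl).comp (by fun_prop) segment_mem).clm_comp
      continuousOn_const
  have integrand_deriv : ∀ t ∈ uIcc (0 : ℝ) 1, HasDerivAt (fun t : ℝ => f (z.1, t • z.2))
      ((fderiv ℝ f (z.1, t • z.2)).comp (inr ℝ E G) z.2) t := fun t ht =>
    (hf.differentiableOn one_ne_zero |>.hasFDerivAt
      (hΩ.mem_nhds (segment_mem t ht))).comp_hasDerivAt t (hasDerivAt_prodMk_smul z.1 z.2 t)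
  rw [ContinuousLinearMap.intervalIntegral_apply integrand_cont.intervalIntegrable,
    intervalIntegral.integral_eq_sub_of_hasDerivAt integrand_deriv
      (integrand_cont.clm_apply continuousOn_const).intervalIntegrable]
  simp [hf₀ z.1 (by simpa using segment_mem 0 (by simp))]

lemma exists_contDiffOn_eq_apply_snd [CompleteSpace F] {n : ℕ∞} (hΩ : IsOpen Ω)
    (hΩ_star : ∀ x, StarConvex ℝ 0 (Prod.mk x ⁻¹' Ω)) (hf : ContDiffOn ℝ (n + 1) f Ω)
    (hf₀ : ∀ x, (x, 0) ∈ Ω → f (x, 0) = 0) :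
    ∃ A : E × G → G →L[ℝ] F, ContDiffOn ℝ n A Ω ∧ (∀ z ∈ Ω, f z = A z z.2) ∧
      ∀ x, A (x, 0) = (fderiv ℝ f (x, 0)).comp (inr ℝ E G) := by
  have hf' : ContDiffOn ℝ n (fderiv ℝ f) Ω :=
    ((contDiffOn_succ_iff_fderiv_of_isOpen hΩ).1 hf).2.2
  have integrand_smooth : ContDiffOn ℝ n
      (fun q => (fderiv ℝ f (fiberScale q)).comp (inr ℝ E G)) (fiberScale ⁻¹' Ω) :=
    (hf'.comp contDiff_fiberScale.contDiffOn fun _ hq => hq).clm_comp contDiffOn_const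
  refine ⟨fun z => ∫ t in (0 : ℝ)..1, (fderiv ℝ f (z.1, t • z.2)).comp (inr ℝ E G), ?_,
    fun z hz => eq_integral_fderiv_comp_inr_apply hΩ hΩ_star (hf.of_le (by simp)) hf₀ hz,
    fun x => by simp⟩
  exact (contDiffOn_integral_unitInterval (hΩ.preimage (contDiff_fiberScale (n := n)).continuous)
    integrand_smooth).mono fun z hz t ht => (hΩ_star z.1).smul_mem hz ht.1 ht.2

lemma exists_contDiffOn_eq_apply_snd_snd [CompleteSpace F] (hΩ : IsOpen Ω)
    (hΩ_star : ∀ x, StarConvex ℝ 0 (Prod.mk x ⁻¹' Ω)) (hf : ContDiffOn ℝ ∞ f Ω)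
    (hf₀ : ∀ x, (x, 0) ∈ Ω → f (x, 0) = 0) (hf'₀ : ∀ x, (x, 0) ∈ Ω → fderiv ℝ f (x, 0) = 0) :
    ∃ B : E × G → G →L[ℝ] G →L[ℝ] F, ContDiffOn ℝ ∞ B Ω ∧ ∀ z ∈ Ω, f z = B z z.2 z.2 := by
  obtain ⟨A, hA, hfA, hA₀⟩ := exists_contDiffOn_eq_apply_snd (n := ⊤) hΩ hΩ_star hf hf₀
  obtain ⟨B, hB, hAB, -⟩ := exists_contDiffOn_eq_apply_snd (n := ⊤) hΩ hΩ_star hA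
    fun x hx => by rw [hA₀, hf'₀ x hx, zero_comp]
  exact ⟨B, hB, fun z hz => by rw [hfA z hz, hAB z hz]⟩

end Hadamard

section InverseFunction

variable {E F : Type*} [NormedAddCommGroup E] [NormedSpace ℝ E] [CompleteSpace E]
  [NormedAddCommGroup F] [NormedSpace ℝ F] {n : WithTop ℕ∞}

lemma exists_openPartialHomeomorph_contDiffOn_symm {f : E → F} {O : Set E} (hO : IsOpen O)
    (hf : ContDiffOn ℝ n f O) (hn : n ≠ 0) {a : E} (ha : a ∈ O) {f' : E ≃L[ℝ] F}
    (hf' : HasFDerivAt f (f' : E →L[ℝ] F) a) :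
    ∃ (e : OpenPartialHomeomorph E F) (r : ℝ), 0 < r ∧ e.source = ball a r ∧ ball a r ⊆ O ∧
      ⇑e = f ∧ ContDiffOn ℝ n e.symm e.target := by
  have hfa : ContDiffAt ℝ n f a := hf.contDiffAt (hO.mem_nhds ha)
  let e₀ := hfa.toOpenPartialHomeomorph f hf' hn
  have isOpen_invertible : IsOpen (O ∩ fderiv ℝ f ⁻¹' range ((↑) : (E ≃L[ℝ] F) → E →L[ℝ] F)) :=
    (hf.continuousOn_fderiv_of_isOpen hO
      (ENat.one_le_iff_ne_zero_withTop.2 hn)).isOpen_inter_preimage hO ContinuousLinearEquiv.isOpen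
  obtain ⟨r, hr, hball⟩ := Metric.isOpen_iff.1 (isOpen_invertible.inter e₀.open_source) a
    ⟨⟨ha, f', hf'.fderiv.symm⟩, hfa.mem_toOpenPartialHomeomorph_source hf' hn⟩
  let e := e₀.restrOpen (ball a r) isOpen_ball
  have source_eq : e.source = ball a r := inter_eq_right.2 fun x hx => (hball hx).2
  refine ⟨e, r, hr, source_eq, fun x hx => (hball hx).1.1, rfl, fun y hy => ?_⟩
  obtain ⟨⟨hxO, g, hg⟩, -⟩ := hball (source_eq ▸ e.map_target hy)
  have hfx : ContDiffAt ℝ n f (e.symm y) := hf.contDiffAt (hO.mem_nhds hxO)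
  refine (e.contDiffAt_symm (f₀' := g) hy ?_ hfx).contDiffWithinAt
  rw [hg]
  exact (hfx.differentiableAt hn).hasFDerivAt

lemma symm_eq_prodMk {X Y Z : Type*} [TopologicalSpace X] [TopologicalSpace Y] [TopologicalSpace Z]
    (e : OpenPartialHomeomorph (X × Y) (X × Z)) (he : ∀ z ∈ e.source, (e z).1 = z.1)
    {q : X × Z} (hq : q ∈ e.target) : e.symm q = (q.1, (e.symm q).2) :=
  Prod.ext (by rw [← he _ (e.map_target hq), e.right_inv hq]) rfl

lemma fderiv_symm_apply_fderiv {E F : Type*} [NormedAddCommGroup E] [NormedSpace ℝ E]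
    [NormedAddCommGroup F] [NormedSpace ℝ F] (e : OpenPartialHomeomorph E F) {x : E}
    (hx : x ∈ e.source) (he : DifferentiableAt ℝ e x) (he_symm : DifferentiableAt ℝ e.symm (e x))
    (v : E) : fderiv ℝ e.symm (e x) (fderiv ℝ e x v) = v := by
  have left_inv : e.symm ∘ e =ᶠ[𝓝 x] id :=
    Filter.eventuallyEq_of_mem (e.open_source.mem_nhds hx) fun y hy => e.left_inv hy
  rw [← comp_apply, ← fderiv_comp x he_symm he, left_inv.fderiv_eq, fderiv_id, id_apply]

variable {P Y : Type*} [NormedAddCommGroup P] [NormedSpace ℝ P] [CompleteSpace P]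
  [NormedAddCommGroup Y] [NormedSpace ℝ Y] [CompleteSpace Y]

lemma exists_openPartialHomeomorph_sub_fixedPoint {T : P × Y → Y} {O : Set (P × Y)}
    (hO : IsOpen O) (hT : ContDiffOn ℝ n T O) (hn : n ≠ 0) {p₀ : P} {y₀ : Y} (h₀ : (p₀, y₀) ∈ O)
    (hfix : T (p₀, y₀) = y₀) {L : P →L[ℝ] Y}
    (hT' : HasFDerivAt T (L.comp (fst ℝ P Y)) (p₀, y₀)) :
    ∃ (e : OpenPartialHomeomorph (P × Y) (P × Y)) (r : ℝ), 0 < r ∧ e.source = ball (p₀, y₀) r ∧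
      ball (p₀, y₀) r ⊆ O ∧ (∀ z, e z = (z.1, z.2 - T z)) ∧ ContDiffOn ℝ n e.symm e.target ∧
      (p₀, 0) ∈ e.target ∧ HasFDerivAt e.symm ((fst ℝ P Y).prod (snd ℝ P Y + L.comp (fst ℝ P Y)))
        (p₀, 0) := by
  let e' : (P × Y) ≃L[ℝ] P × Y := .skewProd (.refl ℝ P) (.refl ℝ Y) (-L)
  have he' : HasFDerivAt (fun z => (z.1, z.2 - T z)) (e' : P × Y →L[ℝ] P × Y) (p₀, y₀) :=
    (hasFDerivAt_fst.prodMk (hasFDerivAt_snd.sub hT')).congr_fderiv <| by ext z <;> simp [e']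
  obtain ⟨e, r, hr, source_eq, source_subset, he, hsymm⟩ :=
    exists_openPartialHomeomorph_contDiffOn_symm hO
      (contDiffOn_fst.prodMk (contDiffOn_snd.sub hT)) hn h₀ he'
  have base_mem : (p₀, y₀) ∈ e.source := source_eq ▸ mem_ball_self hr
  have e_base : e (p₀, y₀) = (p₀, 0) := by simp [he, hfix]
  have target_mem : (p₀, 0) ∈ e.target := e_base ▸ e.map_source base_mem
  have symm_base : e.symm (p₀, 0) = (p₀, y₀) := by rw [← e_base, e.left_inv base_mem]
  refine ⟨e, r, hr, source_eq, source_subset, congrFun he, hsymm, target_mem, ?_⟩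
  exact (e.hasFDerivAt_symm target_mem (by rwa [symm_base, he])).congr_fderiv <| by
    ext z <;> simp [e']

lemma exists_contDiffOn_fixedPoint {T : P × Y → Y} {O : Set (P × Y)} (hO : IsOpen O)
    (hT : ContDiffOn ℝ n T O) (hn : n ≠ 0) {p₀ : P} {y₀ : Y} (h₀ : (p₀, y₀) ∈ O)
    (hfix : T (p₀, y₀) = y₀) {L : P →L[ℝ] Y}
    (hT' : HasFDerivAt T (L.comp (fst ℝ P Y)) (p₀, y₀)) :
    ∃ (sol : P → Y) (δ r : ℝ), 0 < δ ∧ ContDiffOn ℝ n sol (ball p₀ δ) ∧ HasFDerivAt sol L p₀ ∧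
      ∀ p ∈ ball p₀ δ, sol p ∈ ball y₀ r ∧ (p, sol p) ∈ O ∧ T (p, sol p) = sol p ∧
        ∀ y ∈ ball y₀ r, T (p, y) = y → sol p = y := by
  obtain ⟨e, r, hr, source_eq, source_subset, he, hsymm, target_mem, symm_deriv⟩ :=
    exists_openPartialHomeomorph_sub_fixedPoint hO hT hn h₀ hfix hT'
  obtain ⟨δ, hδ, hδ_target⟩ := Metric.isOpen_iff.1
    ((e.open_target.preimage (inl ℝ P Y).continuous).inter isOpen_ball) p₀
      ⟨target_mem, mem_ball_self hr⟩
  refine ⟨fun p => (e.symm (p, 0)).2, δ, r, hδ,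
    contDiff_snd.comp_contDiffOn <| hsymm.comp (inl ℝ P Y).contDiff.contDiffOn
      fun p hp => (hδ_target hp).1, ?_, fun p hp => ?_⟩
  · exact (hasFDerivAt_snd.comp p₀ (symm_deriv.comp p₀ (inl ℝ P Y).hasFDerivAt)).congr_fderiv <| by
      ext p; simp
  · have hp_target : (p, 0) ∈ e.target := (hδ_target hp).1
    have symm_eq := symm_eq_prodMk e (fun z _ => by rw [he]) hp_target
    have source_mem := e.map_target hp_target
    have right_inv := e.right_inv hp_target
    rw [symm_eq] at source_mem right_inv
    rw [source_eq] at source_mem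
    refine ⟨?_, source_subset source_mem, ?_, fun y hy hTy => ?_⟩
    · exact (ball_prod_same p₀ y₀ r ▸ source_mem).2
    · rw [he] at right_inv
      exact (sub_eq_zero.1 (congrArg Prod.snd right_inv)).symm
    · have e_eq : e (p, y) = (p, 0) := by simp [he, hTy]
      have hy_source : (p, y) ∈ e.source :=
        source_eq ▸ ball_prod_same p₀ y₀ r ▸ mk_mem_prod (hδ_target hp).2 hy
      simp only [← e_eq, e.left_inv hy_source]

end InverseFunction

section Volterra

variable {P E : Type u} [NormedAddCommGroup P] [NormedSpace ℝ P]
  [NormedAddCommGroup E] [NormedSpace ℝ E] {φ : ℝ × (P × E) → E} {Ω : Set (ℝ × (P × E))}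

variable (P E) in
/-- The path `t ↦ (p, u t)` obtained by adjoining a constant parameter `p` to a path `u`, as a
continuous linear function of `(p, u)`. -/
def adjoinParameter : P × C(I, E) →L[ℝ] C(I, P × E) :=
  ((inl ℝ P E).compLeftContinuous ℝ I).comp
      ((ContinuousLinearMap.const ℝ I).comp (fst ℝ P C(I, E))) +
    ((inr ℝ P E).compLeftContinuous ℝ I).comp (snd ℝ P C(I, E))

@[simp]
lemma adjoinParameter_apply (z : P × C(I, E)) (t : I) :
    adjoinParameter P E z t = (z.1, z.2 t) := by
  simp [adjoinParameter, ContinuousLinearMap.compLeftContinuous]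

/-- The velocity field `t ↦ φ (t, p, u t)` along the path `u`. -/
def velocity (φ : ℝ × (P × E) → E) (p : P) (u : C(I, E)) : C(I, E) :=
  nemytskii φ (timeGraph (adjoinParameter P E (p, u)))

/-- The Picard operator `((p, w), u) ↦ (t ↦ w + ∫ s in 0..t, φ (s, p, u s))`, whose fixed points
in `u` are the solutions of `u' = φ (t, p, u)`, `u 0 = w`. -/
def picardMap (φ : ℝ × (P × E) → E) (z : (P × E) × C(I, E)) : C(I, E) :=
  ContinuousLinearMap.const ℝ I z.1.2 + primitive (velocity φ z.1.1 z.2)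

/-- The parameters, initial values and paths whose time graph stays in `Ω`. -/
def picardDomain (Ω : Set (ℝ × (P × E))) : Set ((P × E) × C(I, E)) :=
  {z | ∀ t : I, ((t : ℝ), z.1.1, z.2 t) ∈ Ω}

lemma velocity_apply (hφ : ContinuousOn φ Ω) {p : P} {u : C(I, E)}
    (hu : ∀ t : I, ((t : ℝ), p, u t) ∈ Ω) (t : I) : velocity φ p u t = φ (t, p, u t) := by
  have := nemytskii_apply hφ (v := timeGraph (adjoinParameter P E (p, u))) (by simpa using hu) t
  simpa [velocity] using this

lemma isOpen_picardDomain (hΩ : IsOpen Ω) : IsOpen (picardDomain Ω) := by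
  have : Continuous fun z : (P × E) × C(I, E) => timeGraph (adjoinParameter P E (z.1.1, z.2)) :=
    (contDiff_timeGraph (E := P × E) (n := 0)).continuous.comp
      ((adjoinParameter P E).continuous.comp (by fun_prop))
  simpa [picardDomain] using (isOpen_setOf_forall_mem (K := I) hΩ).preimage this

lemma contDiffOn_velocity {n : ℕ∞} (hΩ : IsOpen Ω) (hφ : ContDiffOn ℝ n φ Ω) :
    ContDiffOn ℝ n (fun z : (P × E) × C(I, E) => velocity φ z.1.1 z.2) (picardDomain Ω) :=
  (contDiffOn_nemytskii_timeGraph hΩ hφ).comp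
    ((adjoinParameter P E).contDiff.comp (by fun_prop)).contDiffOn
    fun z hz t => by simpa using hz t

lemma contDiffOn_picardMap {n : ℕ∞} (hΩ : IsOpen Ω) (hφ : ContDiffOn ℝ n φ Ω) :
    ContDiffOn ℝ n (picardMap φ) (picardDomain Ω) := by
  let initial : (P × E) × C(I, E) →L[ℝ] C(I, E) :=
    (ContinuousLinearMap.const ℝ I).comp ((snd ℝ P E).comp (fst ℝ (P × E) C(I, E)))
  exact initial.contDiff.contDiffOn.add
    ((primitive (E := E)).contDiff.comp_contDiffOn (contDiffOn_velocity hΩ hφ))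

lemma hasFDerivAt_velocity_of_fderiv_eq_zero (hΩ : IsOpen Ω) (hφ : ContDiffOn ℝ 1 φ Ω)
    {z : (P × E) × C(I, E)} (hz : z ∈ picardDomain Ω)
    (hφ' : ∀ t : I, fderiv ℝ φ (t, z.1.1, z.2 t) = 0) :
    HasFDerivAt (fun z : (P × E) × C(I, E) => velocity φ z.1.1 z.2)
      (0 : (P × E) × C(I, E) →L[ℝ] C(I, E)) z := by
  let graph : (P × E) × C(I, E) → C(I, ℝ × (P × E)) :=
    fun z => timeGraph (adjoinParameter P E (z.1.1, z.2))
  have hgraph : DifferentiableAt ℝ graph z :=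
    ((contDiff_timeGraph (E := P × E)).differentiable one_ne_zero _).comp z
      ((adjoinParameter P E).differentiableAt.comp z (by fun_prop))
  have graph_mem : ∀ t, graph z t ∈ Ω := fun t => by simpa [graph] using hz t
  have fderiv_eq_zero : nemytskii (fderiv ℝ φ) (graph z) = 0 := by
    ext1 t
    rw [nemytskii_apply (hφ.continuousOn_fderiv_of_isOpen hΩ le_rfl) graph_mem]
    simpa [graph] using hφ' t
  exact ((hasFDerivAt_nemytskii hΩ hφ graph_mem).comp z hgraph.hasFDerivAt).congr_fderiv <| by
    rw [fderiv_eq_zero, map_zero, zero_comp]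

lemma hasFDerivAt_picardMap_of_fderiv_eq_zero (hΩ : IsOpen Ω) (hφ : ContDiffOn ℝ 1 φ Ω)
    {z : (P × E) × C(I, E)} (hz : z ∈ picardDomain Ω)
    (hφ' : ∀ t : I, fderiv ℝ φ (t, z.1.1, z.2 t) = 0) :
    HasFDerivAt (picardMap φ)
      (((ContinuousLinearMap.const ℝ I).comp (snd ℝ P E)).comp (fst ℝ (P × E) C(I, E))) z := by
  let initial : (P × E) × C(I, E) →L[ℝ] C(I, E) :=
    ((ContinuousLinearMap.const ℝ I).comp (snd ℝ P E)).comp (fst ℝ (P × E) C(I, E))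
  have hvelocity := hasFDerivAt_velocity_of_fderiv_eq_zero hΩ hφ hz hφ'
  exact (initial.hasFDerivAt.add
    ((primitive (E := E)).hasFDerivAt.comp z hvelocity)).congr_fderiv (by simp [initial])

lemma picardMap_const_of_eq_zero (hφ : ContinuousOn φ Ω) {p : P} {w : E}
    (hΩ : ∀ t : I, ((t : ℝ), p, w) ∈ Ω) (h₀ : ∀ t : I, φ (t, p, w) = 0) :
    picardMap φ ((p, w), ContinuousLinearMap.const ℝ I w) = ContinuousLinearMap.const ℝ I w := by
  have velocity_eq_zero : velocity φ p (ContinuousLinearMap.const ℝ I w) = 0 := by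
    ext t
    exact (velocity_apply hφ hΩ t).trans (h₀ t)
  simp [picardMap, velocity_eq_zero]

lemma exists_contDiffOn_picardMap_fixedPoint [CompleteSpace P] [CompleteSpace E] (hΩ : IsOpen Ω)
    (hφ : ContDiffOn ℝ ∞ φ Ω) {p₀ : P} {w₀ : E} (h_mem : ∀ t : I, ((t : ℝ), p₀, w₀) ∈ Ω)
    (hφ₀ : ∀ t : I, φ (t, p₀, w₀) = 0) (hφ'₀ : ∀ t : I, fderiv ℝ φ (t, p₀, w₀) = 0) :
    ∃ (sol : P × E → C(I, E)) (δ r : ℝ), 0 < δ ∧ ContDiffOn ℝ ∞ sol (ball (p₀, w₀) δ) ∧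
      HasFDerivAt sol ((ContinuousLinearMap.const ℝ I).comp (snd ℝ P E)) (p₀, w₀) ∧
      ∀ z ∈ ball (p₀, w₀) δ, sol z ∈ ball (ContinuousLinearMap.const ℝ I w₀) r ∧
        (z, sol z) ∈ picardDomain Ω ∧ picardMap φ (z, sol z) = sol z ∧
        ∀ u ∈ ball (ContinuousLinearMap.const ℝ I w₀) r, picardMap φ (z, u) = u → sol z = u := by
  have base_mem : ((p₀, w₀), ContinuousLinearMap.const ℝ I w₀) ∈ picardDomain Ω := h_mem
  have picardMap_smooth : ContDiffOn ℝ ∞ (picardMap φ) (picardDomain Ω) :=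
    contDiffOn_picardMap (n := ⊤) hΩ hφ
  have base_deriv :=
    hasFDerivAt_picardMap_of_fderiv_eq_zero hΩ (hφ.of_le (by simp)) base_mem hφ'₀
  have base_fixed := picardMap_const_of_eq_zero hφ.continuousOn h_mem hφ₀
  have domain_open := isOpen_picardDomain hΩ
  exact exists_contDiffOn_fixedPoint domain_open picardMap_smooth (by simp) base_mem base_fixed
    base_deriv

end Volterra

section Rescaling

variable {P E : Type u} [NormedAddCommGroup P] [NormedSpace ℝ P]
  [NormedAddCommGroup E] [NormedSpace ℝ E] {B : P × E → E →L[ℝ] E →L[ℝ] E} {Ω : Set (P × E)}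

/-- The blow-up `(t, x, u) ↦ t⁻² R (x, t u)` of the field `R (x, v) = B (x, v) v v`, written so that
it is defined and smooth at `t = 0` as well. -/
def rescaledField (B : P × E → E →L[ℝ] E →L[ℝ] E) (q : ℝ × (P × E)) : E :=
  B (fiberScale q) q.2.2 q.2.2

lemma rescaledField_smul {X : Type u} (B : X × E → E →L[ℝ] E →L[ℝ] E) (l t : ℝ) (x : X) (u : E) :
    rescaledField B (t, x, l • u) = l ^ 2 • rescaledField B (l * t, x, u) := by
  simp [rescaledField, fiberScale, smul_smul, sq, mul_comm l t]

lemma contDiffOn_rescaledField {n : WithTop ℕ∞} (hB : ContDiffOn ℝ n B Ω) :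
    ContDiffOn ℝ n (rescaledField B) (fiberScale ⁻¹' Ω) :=
  ((hB.comp contDiff_fiberScale.contDiffOn fun _ hq => hq).clm_apply (by fun_prop)).clm_apply
    (by fun_prop)

lemma fderiv_rescaledField_zero (hΩ : IsOpen Ω) (hB : DifferentiableOn ℝ B Ω) {t : ℝ} {x : P}
    (hx : (x, 0) ∈ Ω) : fderiv ℝ (rescaledField B) (t, x, 0) = 0 := by
  have scale_eq : fiberScale (t, x, (0 : E)) = (x, 0) := by simp [fiberScale]
  have hB_scale : DifferentiableAt ℝ (B ∘ fiberScale) (t, x, 0) :=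
    DifferentiableAt.comp (g := B) _
      (by rw [scale_eq]; exact hB.differentiableAt (hΩ.mem_nhds hx))
      (contDiff_fiberScale.differentiable one_ne_zero _)
  have hsnd : HasFDerivAt (fun q : ℝ × (P × E) => q.2.2) _ (t, x, 0) :=
    ((snd ℝ P E).comp (snd ℝ ℝ (P × E))).hasFDerivAt
  have hderiv := (hB_scale.hasFDerivAt.clm_apply hsnd).clm_apply hsnd
  exact (hderiv.congr_fderiv (by ext <;> simp)).fderiv

/-- The dilation `t ↦ l • u (l t)` of a path `u`. -/
def dilatePath (l : I) (u : C(I, E)) : C(I, E) := (l : ℝ) • u.comp ⟨(l * ·), by fun_prop⟩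

@[simp]
lemma dilatePath_apply (l : I) (u : C(I, E)) (t : I) :
    dilatePath l u t = (l : ℝ) • u (l * t) := rfl

lemma dilatePath_mem_ball {l : I} {u : C(I, E)} {r : ℝ} (hu : u ∈ ball 0 r) :
    dilatePath l u ∈ ball 0 r := by
  rw [mem_ball_zero_iff] at hu ⊢
  refine lt_of_le_of_lt ((ContinuousMap.norm_le _ (norm_nonneg u)).2 fun t => ?_) hu
  rw [dilatePath_apply, norm_smul, Real.norm_of_nonneg l.2.1]
  exact (mul_le_of_le_one_left (norm_nonneg _) l.2.2).trans (u.norm_coe_le_norm _)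

lemma primitive_smul_dilatePath (l : I) (v : C(I, E)) :
    primitive ((l : ℝ) • dilatePath l v) = dilatePath l (primitive v) := by
  ext t
  simp [dilatePath, primitive_comp_mul, map_smul]

lemma velocity_dilatePath (hB : ContinuousOn B Ω) {x : P} {u : C(I, E)}
    (hu : ∀ t : I, ((t : ℝ), x, u t) ∈ fiberScale ⁻¹' Ω) (l : I) :
    velocity (rescaledField B) x (dilatePath l u) =
      (l : ℝ) • dilatePath l (velocity (rescaledField B) x u) := by
  have hφ : ContinuousOn (rescaledField B) (fiberScale ⁻¹' Ω) :=
    (contDiffOn_rescaledField (contDiffOn_zero.2 hB)).continuousOn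
  have dilate_mem : ∀ t : I, ((t : ℝ), x, dilatePath l u t) ∈ fiberScale ⁻¹' Ω := fun t => by
    simpa [fiberScale, smul_smul, mul_comm] using hu (l * t)
  ext t
  rw [velocity_apply hφ dilate_mem, dilatePath_apply, rescaledField_smul]
  simp [velocity_apply hφ hu, smul_smul, sq]

lemma picardMap_dilatePath (hB : ContinuousOn B Ω) {z : P × E} {u : C(I, E)}
    (hu : (z, u) ∈ picardDomain (fiberScale ⁻¹' Ω)) (l : I) :
    picardMap (rescaledField B) ((z.1, (l : ℝ) • z.2), dilatePath l u) =
      dilatePath l (picardMap (rescaledField B) (z, u)) := by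
  simp only [picardMap, velocity_dilatePath hB hu, primitive_smul_dilatePath]
  ext t
  simp

lemma exists_contDiffOn_picardMap_fixedPoint_dilatePath [CompleteSpace P] [CompleteSpace E]
    (hΩ : IsOpen Ω) (hB : ContDiffOn ℝ ∞ B Ω) {x₀ : P} (hx₀ : (x₀, 0) ∈ Ω) :
    ∃ (sol : P × E → C(I, E)) (δ : ℝ), 0 < δ ∧ ContDiffOn ℝ ∞ sol (ball (x₀, 0) δ) ∧
      HasFDerivAt sol ((ContinuousLinearMap.const ℝ I).comp (snd ℝ P E)) (x₀, 0) ∧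
      ∀ z ∈ ball (x₀, 0) δ, (z, sol z) ∈ picardDomain (fiberScale ⁻¹' Ω) ∧
        picardMap (rescaledField B) (z, sol z) = sol z ∧
        ∀ l : I, sol (z.1, (l : ℝ) • z.2) = dilatePath l (sol z) := by
  have hΩ' : IsOpen (fiberScale ⁻¹' Ω) := hΩ.preimage (contDiff_fiberScale (n := 0)).continuous
  have hφ : ContDiffOn ℝ ∞ (rescaledField B) (fiberScale ⁻¹' Ω) := contDiffOn_rescaledField hB
  obtain ⟨sol, δ, r, hδ, sol_smooth, sol_deriv, hsol⟩ :=
    exists_contDiffOn_picardMap_fixedPoint hΩ' hφ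
      (fun t : I => by simpa [fiberScale] using hx₀) (fun t => by simp [rescaledField])
      fun t => fderiv_rescaledField_zero hΩ (hB.differentiableOn (by simp)) hx₀
  rw [map_zero] at hsol
  refine ⟨sol, δ, hδ, sol_smooth, sol_deriv, fun z hz => ?_⟩
  obtain ⟨sol_mem, domain_mem, sol_fixed, -⟩ := hsol z hz
  refine ⟨domain_mem, sol_fixed, fun l => ?_⟩
  obtain ⟨-, -, -, unique⟩ := hsol _ (prodMk_smul_mem_ball hz l.2)
  exact unique _ (dilatePath_mem_ball sol_mem) <| by
    rw [picardMap_dilatePath hB.continuousOn domain_mem, sol_fixed]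

end Rescaling

section Conjugation

variable {P E : Type u} [NormedAddCommGroup P] [NormedSpace ℝ P]
  [NormedAddCommGroup E] [NormedSpace ℝ E] [CompleteSpace E]

lemma hasDerivAt_smul_add_integral (w : E) (v : C(I, E)) (t : I) :
    HasDerivAt (fun s : ℝ => s • (w + ∫ r in (0 : ℝ)..s, IccExtend (zero_le_one' ℝ) v r))
      (w + primitive v t + (t : ℝ) • v t) t := by
  have primitive_deriv : HasDerivAt (fun s : ℝ => ∫ r in (0 : ℝ)..s, IccExtend (zero_le_one' ℝ) v r)
      (v t) t := by
    simpa using (v.continuous.Icc_extend'.integral_hasStrictDerivAt 0 (t : ℝ)).hasDerivAt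
  exact ((hasDerivAt_id (t : ℝ)).smul (primitive_deriv.const_add w)).congr_deriv <| by
    simp [primitive_apply, add_comm]

lemma fderiv_apply_eq_of_homogeneous {φ : ℝ × (P × E) → E} {g : P × E → E} {z : P × E}
    {u : C(I, E)} (hg : DifferentiableAt ℝ g z) (hu : picardMap φ (z, u) = u)
    (hgu : ∀ l : I, g (z.1, (l : ℝ) • z.2) = (l : ℝ) • u l) :
    fderiv ℝ g z (0, z.2) = u 1 + velocity φ z.1 u 1 := by
  have along_ray : HasDerivAt (fun l : ℝ => g (z.1, l • z.2)) (fderiv ℝ g z (0, z.2)) 1 :=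
    HasFDerivAt.comp_hasDerivAt 1 (by simpa using hg.hasFDerivAt) (hasDerivAt_prodMk_smul z.1 z.2 1)
  have along_solution := hasDerivAt_smul_add_integral z.2 (velocity φ z.1 u) 1
  have solution_eq (l : I) : u l = z.2 + primitive (velocity φ z.1 u) l :=
    (DFunLike.congr_fun hu l).symm
  have agree : ∀ l ∈ I, g (z.1, l • z.2) =
      l • (z.2 + ∫ r in (0 : ℝ)..l, IccExtend (zero_le_one' ℝ) (velocity φ z.1 u) r) :=
    fun l hl => by rw [hgu ⟨l, hl⟩, solution_eq, primitive_apply]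
  have one_mem : (1 : ℝ) ∈ I := one_mem
  rw [(uniqueDiffOn_Icc zero_lt_one 1 one_mem).eq_deriv _ along_ray.hasDerivWithinAt
    (along_solution.hasDerivWithinAt.congr agree (agree 1 one_mem)), ← solution_eq]
  simp

lemma exists_contDiffOn_conjugation [CompleteSpace P] {R : P × E → E} {Ω : Set (P × E)}
    (hΩ : IsOpen Ω) (hΩ_star : ∀ x, StarConvex ℝ 0 (Prod.mk x ⁻¹' Ω)) (hR : ContDiffOn ℝ ∞ R Ω)
    (hR₀ : ∀ x, (x, 0) ∈ Ω → R (x, 0) = 0) (hR'₀ : ∀ x, (x, 0) ∈ Ω → fderiv ℝ R (x, 0) = 0)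
    {x₀ : P} (hx₀ : (x₀, 0) ∈ Ω) :
    ∃ (g : P × E → E) (δ : ℝ), 0 < δ ∧ ContDiffOn ℝ ∞ g (ball (x₀, 0) δ) ∧
      HasFDerivAt g (snd ℝ P E) (x₀, 0) ∧ ∀ z ∈ ball (x₀, 0) δ,
        (z.1, g z) ∈ Ω ∧ g (z.1, 0) = 0 ∧ fderiv ℝ g z (0, z.2) = g z + R (z.1, g z) := by
  obtain ⟨B, hB, hRB⟩ := exists_contDiffOn_eq_apply_snd_snd hΩ hΩ_star hR hR₀ hR'₀
  obtain ⟨sol, δ, hδ, sol_smooth, sol_deriv, hsol⟩ :=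
    exists_contDiffOn_picardMap_fixedPoint_dilatePath hΩ hB hx₀
  let eval_one : C(I, E) →L[ℝ] E := ContinuousMap.evalCLM ℝ 1
  let g : P × E → E := fun z => eval_one (sol z)
  have g_smooth : ContDiffOn ℝ ∞ g (ball (x₀, 0) δ) :=
    eval_one.contDiff.comp_contDiffOn sol_smooth
  refine ⟨g, δ, hδ, g_smooth, eval_one.hasFDerivAt.comp _ sol_deriv, fun z hz => ?_⟩
  obtain ⟨domain_mem, sol_fixed, sol_dilate⟩ := hsol z hz
  have g_ray (l : I) : g (z.1, (l : ℝ) • z.2) = (l : ℝ) • sol z l := by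
    simp [g, eval_one, sol_dilate]
  have g_mem : (z.1, g z) ∈ Ω := by simpa [fiberScale, g, eval_one] using domain_mem 1
  refine ⟨g_mem, by simpa using g_ray 0, ?_⟩
  have g_diff : DifferentiableAt ℝ g z :=
    (g_smooth.contDiffAt (isOpen_ball.mem_nhds hz)).differentiableAt (by simp)
  have velocity_one : velocity (rescaledField B) z.1 (sol z) 1 = R (z.1, g z) := by
    rw [velocity_apply (contDiffOn_rescaledField hB).continuousOn domain_mem, hRB _ g_mem]
    simp [rescaledField, fiberScale, g, eval_one]
  rw [fderiv_apply_eq_of_homogeneous g_diff sol_fixed g_ray, velocity_one]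
  rfl

end Conjugation

section NormalForm

variable {E : Type u} [NormedAddCommGroup E] [NormedSpace ℝ E] {X : E × E → E × E}
  {U : Set (E × E)}

variable (E) in
/-- The shear `(x, v) ↦ (x, v + x)`, which carries the zero section to the diagonal. -/
def shear : (E × E) ≃L[ℝ] E × E := .skewProd (.refl ℝ E) (.refl ℝ E) (.id ℝ E)

@[simp]
lemma shear_apply (z : E × E) : shear E z = (z.1, z.2 + z.1) := rfl

/-- The nonlinear part `(x, v) ↦ X (x, v + x) - v` of the fibre component of `X` along the
diagonal, in the coordinates given by `shear`. -/
def nonlinearPart (X : E × E → E × E) (z : E × E) : E := (X (shear E z)).2 - z.2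

lemma contDiffOn_nonlinearPart {n : WithTop ℕ∞} (hX : ContDiffOn ℝ n X U) :
    ContDiffOn ℝ n (nonlinearPart X) (shear E ⁻¹' U) :=
  (hX.comp (shear E).contDiff.contDiffOn fun _ hz => hz).snd.sub contDiffOn_snd

lemma fderiv_nonlinearPart_zero {x : E} (hX : DifferentiableAt ℝ X (x, x))
    (hX' : fderiv ℝ X (x, x) = (inr ℝ E E).comp (snd ℝ E E - fst ℝ E E)) :
    fderiv ℝ (nonlinearPart X) (x, 0) = 0 := by
  have hX_shear : HasFDerivAt X ((inr ℝ E E).comp (snd ℝ E E - fst ℝ E E)) (shear E (x, 0)) := by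
    simpa [hX'] using hX.hasFDerivAt
  have hderiv := ((hX_shear.comp (x, 0) (shear E).hasFDerivAt).snd).sub hasFDerivAt_snd
  exact (hderiv.congr_fderiv (by ext <;> simp)).fderiv

lemma fderiv_shear_prodMk_apply {g : E × E → E} {z : E × E} (hg : DifferentiableAt ℝ g z) (w : E) :
    fderiv ℝ (fun z => shear E (z.1, g z)) z (0, w) = (0, fderiv ℝ g z (0, w)) := by
  have hderiv : HasFDerivAt (fun z => shear E (z.1, g z)) _ z :=
    (shear E).hasFDerivAt.comp z (hasFDerivAt_fst.prodMk hg.hasFDerivAt)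
  rw [hderiv.fderiv]
  simp

lemma exists_contDiffOn_shear_conjugation [CompleteSpace E] (hU : IsOpen U)
    (hX : ContDiffOn ℝ ∞ X U) (hX₀ : ∀ x, (x, x) ∈ U → X (x, x) = 0)
    (hX'₀ : ∀ x, (x, x) ∈ U → fderiv ℝ X (x, x) = (inr ℝ E E).comp (snd ℝ E E - fst ℝ E E))
    {x₀ : E} (hx₀ : (x₀, x₀) ∈ U) :
    ∃ (g : E × E → E) (δ : ℝ), 0 < δ ∧ ContDiffOn ℝ ∞ g (ball (x₀, 0) δ) ∧
      HasFDerivAt g (snd ℝ E E) (x₀, 0) ∧ ∀ z ∈ ball (x₀, 0) δ,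
        shear E (z.1, g z) ∈ U ∧ g (z.1, 0) = 0 ∧
          fderiv ℝ g z (0, z.2) = (X (shear E (z.1, g z))).2 := by
  obtain ⟨ε, hε, hball⟩ := Metric.isOpen_iff.1 (hU.preimage (shear E).continuous) (x₀, 0)
    (by simpa using hx₀)
  have diag_mem : ∀ x, (x, 0) ∈ ball (x₀, (0 : E)) ε → (x, x) ∈ U := fun x hx => by
    simpa using hball hx
  have star (x : E) : StarConvex ℝ 0 (Prod.mk x ⁻¹' ball (x₀, (0 : E)) ε) :=
    starConvex_zero_iff.2 fun v hv t ht₀ ht₁ => prodMk_smul_mem_ball hv ⟨ht₀, ht₁⟩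
  obtain ⟨g, δ, hδ, g_smooth, g_deriv, hg⟩ := exists_contDiffOn_conjugation isOpen_ball star
    ((contDiffOn_nonlinearPart hX).mono hball)
    (fun x hx => by simp [nonlinearPart, hX₀ x (diag_mem x hx)])
    (fun x hx => fderiv_nonlinearPart_zero
      ((hX.contDiffAt (hU.mem_nhds (diag_mem x hx))).differentiableAt (by simp))
      (hX'₀ x (diag_mem x hx)))
    (mem_ball_self hε)
  refine ⟨g, δ, hδ, g_smooth, g_deriv, fun z hz => ?_⟩
  obtain ⟨g_mem, g_zero, g_conj⟩ := hg z hz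
  exact ⟨hball g_mem, g_zero, by rw [g_conj, nonlinearPart, add_sub_cancel]⟩

lemma exists_openPartialHomeomorph_shear_prodMk [CompleteSpace E] {n : WithTop ℕ∞} (hn : n ≠ 0)
    {g : E × E → E} {x₀ : E} {δ : ℝ} (hδ : 0 < δ) (hg : ContDiffOn ℝ n g (ball (x₀, 0) δ))
    (hg' : HasFDerivAt g (snd ℝ E E) (x₀, 0)) :
    ∃ (e : OpenPartialHomeomorph (E × E) (E × E)) (r : ℝ), 0 < r ∧ e.source = ball (x₀, 0) r ∧
      ball (x₀, 0) r ⊆ ball (x₀, (0 : E)) δ ∧ ⇑e = (fun z => shear E (z.1, g z)) ∧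
      ContDiffOn ℝ n e.symm e.target := by
  have chart_deriv : HasFDerivAt (fun z => shear E (z.1, g z)) (shear E : E × E →L[ℝ] E × E)
      (x₀, 0) :=
    ((shear E).hasFDerivAt.comp (x₀, 0) (hasFDerivAt_fst.prodMk hg')).congr_fderiv <| by
      ext <;> simp
  exact exists_openPartialHomeomorph_contDiffOn_symm isOpen_ball
    ((shear E).contDiff.comp_contDiffOn (contDiffOn_fst.prodMk hg)) hn (mem_ball_self hδ)
    chart_deriv

lemma exists_openPartialHomeomorph_linearizing [CompleteSpace E] (hU : IsOpen U)
    (hX : ContDiffOn ℝ ∞ X U) (hfiber : ∀ q ∈ U, (X q).1 = 0)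
    (hX₀ : ∀ x, (x, x) ∈ U → X (x, x) = 0)
    (hX'₀ : ∀ x, (x, x) ∈ U → fderiv ℝ X (x, x) = (inr ℝ E E).comp (snd ℝ E E - fst ℝ E E))
    {x₀ : E} (hx₀ : (x₀, x₀) ∈ U) :
    ∃ e : OpenPartialHomeomorph (E × E) (E × E), (x₀, x₀) ∈ e.target ∧ e.target ⊆ U ∧
      ContDiffOn ℝ ∞ e e.source ∧ ContDiffOn ℝ ∞ e.symm e.target ∧
      ∀ z ∈ e.source, (e z).1 = z.1 ∧ ((e z).1 = (e z).2 ↔ z.2 = 0) ∧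
        fderiv ℝ e z (0, z.2) = X (e z) := by
  obtain ⟨g, δ, hδ, g_smooth, g_deriv, hg⟩ :=
    exists_contDiffOn_shear_conjugation hU hX hX₀ hX'₀ hx₀
  obtain ⟨e, r, hr, source_eq, source_subset, e_eq, symm_smooth⟩ :=
    exists_openPartialHomeomorph_shear_prodMk (by simp) hδ g_smooth g_deriv
  have e_apply (z : E × E) : e z = shear E (z.1, g z) := congrFun e_eq z
  have source_subset_ball : e.source ⊆ ball (x₀, 0) δ := source_eq ▸ source_subset
  have base_mem : (x₀, 0) ∈ e.source := source_eq ▸ mem_ball_self hr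
  refine ⟨e, ?_, fun q hq => ?_, ?_, symm_smooth, fun z hz => ?_⟩
  · simpa [e_apply, (hg _ (mem_ball_self hδ)).2.1] using e.map_source base_mem
  · rw [← e.right_inv hq, e_apply]
    exact (hg _ (source_subset_ball (e.map_target hq))).1
  · rw [e_eq]
    exact (shear E).contDiff.comp_contDiffOn
      (contDiffOn_fst.prodMk (g_smooth.mono source_subset_ball))
  obtain ⟨g_mem, g_zero, g_conj⟩ := hg z (source_subset_ball hz)
  refine ⟨by simp [e_apply], ⟨fun h_diag => ?_, fun hz₂ => ?_⟩, ?_⟩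
  · have g_eq_zero : g z = 0 := by simpa [e_apply] using h_diag
    have zero_section_mem : (z.1, (0 : E)) ∈ e.source := by
      rw [source_eq] at hz ⊢
      simpa using prodMk_smul_mem_ball hz unitInterval.zero_mem
    exact congrArg Prod.snd <|
      e.injOn hz zero_section_mem (by simp [e_apply, g_eq_zero, g_zero])
  · have g_eq_zero : g z = 0 := g_zero ▸ congrArg g (Prod.ext rfl hz₂)
    simp [e_apply, g_eq_zero]
  · have g_diff : DifferentiableAt ℝ g z :=
      (g_smooth.contDiffAt (isOpen_ball.mem_nhds (source_subset_ball hz))).differentiableAt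
        (by simp)
    rw [e_apply, e_eq, fderiv_shear_prodMk_apply g_diff, g_conj]
    exact Prod.ext (hfiber _ g_mem).symm rfl

end NormalForm

end EulerNormalForm

section IsEulerVF

open ContinuousLinearMap

variable {d : ℕ} {X : Pt d → Pt d} {U : Set (Pt d)} {x : EuclideanSpace ℝ (Fin d)}

lemma VanishesToOrder.eq_zero {m : ℕ} {g : Pt d → ℝ} (hg : VanishesToOrder m g U) (hm : 0 < m)
    {p : Pt d} (hp : p ∈ Diag d ∩ U) : g p = 0 := by
  simpa [hg 0 hm p hp] using (iteratedFDeriv_zero_apply (𝕜 := ℝ) (f := g) (x := p) 0).symm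

lemma VanishesToOrder.fderiv_eq_zero {m : ℕ} {g : Pt d → ℝ} (hg : VanishesToOrder m g U)
    (hm : 1 < m) {p : Pt d} (hp : p ∈ Diag d ∩ U) : fderiv ℝ g p = 0 := by
  rw [← norm_eq_zero, ← norm_iteratedFDeriv_one, hg 1 hm p hp, norm_zero]

variable (d) in
/-- The coordinate functions `(x, y) ↦ yⁱ - xⁱ`, which vanish on the diagonal. -/
def Pt.coordDiff (i : Fin d) : Pt d →L[ℝ] ℝ :=
  (EuclideanSpace.proj i).comp (snd ℝ _ _ - fst ℝ _ _)

@[simp]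
lemma Pt.coordDiff_apply (i : Fin d) (q : Pt d) : Pt.coordDiff d i q = q.2 i - q.1 i := rfl

namespace IsEulerVF

lemma vanishesToOrder_clm (hX : IsEulerVF X U) {L : Pt d →L[ℝ] ℝ} (hL : ∀ x, L (x, x) = 0) :
    VanishesToOrder 2 (fun q => L (X q) - L q) U := by
  simpa [vfApply] using hX.euler L L.contDiff.contDiffOn fun q hq => by
    rw [show q = (q.1, q.1) from Prod.ext rfl hq.1.symm, hL]

lemma differentiableAt (hX : IsEulerVF X U) (hU : IsOpen U) {q : Pt d} (hq : q ∈ U) :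
    DifferentiableAt ℝ X q :=
  (hX.smooth.contDiffAt (hU.mem_nhds hq)).differentiableAt (by simp)

lemma clm_comp_fderiv_diag (hX : IsEulerVF X U) (hU : IsOpen U) {L : Pt d →L[ℝ] ℝ}
    (hL : ∀ x, L (x, x) = 0) (hx : (x, x) ∈ U) : L.comp (fderiv ℝ X (x, x)) = L := by
  have hderiv := (L.hasFDerivAt.comp _ (hX.differentiableAt hU hx).hasFDerivAt).sub L.hasFDerivAt
  have := (hX.vanishesToOrder_clm hL).fderiv_eq_zero one_lt_two ⟨rfl, hx⟩
  exact sub_eq_zero.1 (hderiv.fderiv.symm.trans this)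

lemma apply_diag (hX : IsEulerVF X U) (hx : (x, x) ∈ U) : X (x, x) = 0 := by
  have fst_eq := hX.fiber _ hx
  refine Prod.ext fst_eq (PiLp.ext fun i => ?_)
  simpa [fst_eq] using (hX.vanishesToOrder_clm (L := Pt.coordDiff d i) (by simp)).eq_zero two_pos
    ⟨rfl, hx⟩

lemma fderiv_diag (hX : IsEulerVF X U) (hU : IsOpen U) (hx : (x, x) ∈ U) :
    fderiv ℝ X (x, x) = (inr ℝ _ _).comp (snd ℝ _ _ - fst ℝ _ _) := by
  have fst_eventuallyEq : (fun q => (X q).1) =ᶠ[nhds (x, x)] fun _ => 0 :=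
    Filter.eventuallyEq_of_mem (hU.mem_nhds hx) hX.fiber
  have fst_comp : (fst ℝ _ _).comp (fderiv ℝ X (x, x)) = 0 := by
    rw [← (hX.differentiableAt hU hx).hasFDerivAt.fst.fderiv, fst_eventuallyEq.fderiv_eq]
    simp
  refine ContinuousLinearMap.ext fun w => ?_
  have fst_eq : (fderiv ℝ X (x, x) w).1 = 0 := DFunLike.congr_fun fst_comp w
  refine Prod.ext fst_eq (PiLp.ext fun i => ?_)
  simpa [fst_eq] using
    DFunLike.congr_fun (hX.clm_comp_fderiv_diag (L := Pt.coordDiff d i) hU (by simp) hx) w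

end IsEulerVF

end IsEulerVF

theorem euler_normal_form_general {E : Type*} [NormedAddCommGroup E] [NormedSpace ℝ E]
    [CompleteSpace E] {X : E × E → E × E} {U : Set (E × E)} (hU : IsOpen U)
    (hX : ContDiffOn ℝ (⊤ : ℕ∞) X U) (hfiber : ∀ q ∈ U, (X q).1 = 0)
    (hX₀ : ∀ x, (x, x) ∈ U → X (x, x) = 0)
    (hX'₀ : ∀ x, (x, x) ∈ U → fderiv ℝ X (x, x) =
      (ContinuousLinearMap.inr ℝ E E).comp
        (ContinuousLinearMap.snd ℝ E E - ContinuousLinearMap.fst ℝ E E))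
    {x₀ : E} (hx₀ : (x₀, x₀) ∈ U) :
    ∃ (V : Set (E × E)) (h : E × E → E), IsOpen V ∧ (x₀, x₀) ∈ V ∧ V ⊆ U ∧
      ContDiffOn ℝ (⊤ : ℕ∞) h V ∧
      InjOn (fun q : E × E => (q.1, h q)) V ∧
      IsOpen ((fun q : E × E => (q.1, h q)) '' V) ∧
      (∃ Ψinv : E × E → E × E,
        ContDiffOn ℝ (⊤ : ℕ∞) Ψinv ((fun q : E × E => (q.1, h q)) '' V) ∧
        ∀ q ∈ V, Ψinv (q.1, h q) = q) ∧
      (∀ q ∈ V, q.1 = q.2 ↔ h q = 0) ∧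
      ∀ q ∈ V, fderiv ℝ h q (X q) = h q := by
  obtain ⟨e, base_mem, target_subset, e_smooth, symm_smooth, he⟩ :=
    EulerNormalForm.exists_openPartialHomeomorph_linearizing hU hX hfiber hX₀ hX'₀ hx₀
  let h : E × E → E := fun q => (e.symm q).2
  have symm_eq : EqOn (fun q => (q.1, h q)) e.symm e.target := fun q hq =>
    (EulerNormalForm.symm_eq_prodMk e (fun z hz => (he z hz).1) hq).symm
  have image_eq : (fun q => (q.1, h q)) '' e.target = e.source :=
    symm_eq.image_eq.trans e.symm_image_target_eq_source
  refine ⟨e.target, h, e.open_target, base_mem, target_subset,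
    contDiff_snd.comp_contDiffOn symm_smooth, e.symm.injOn.congr symm_eq.symm,
    image_eq ▸ e.open_source, ⟨e, image_eq ▸ e_smooth, fun q hq => ?_⟩, fun q hq => ?_,
    fun q hq => ?_⟩
  · exact (congrArg e (symm_eq hq)).trans (e.right_inv hq)
  · simpa only [e.right_inv hq] using (he _ (e.map_target hq)).2.1
  · have e_diff : DifferentiableAt ℝ e (e.symm q) :=
      (e_smooth.contDiffAt (e.open_source.mem_nhds (e.map_target hq))).differentiableAt (by simp)
    have symm_diff : DifferentiableAt ℝ e.symm q :=
      (symm_smooth.contDiffAt (e.open_target.mem_nhds hq)).differentiableAt (by simp)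
    have symm_apply := EulerNormalForm.fderiv_symm_apply_fderiv e (e.map_target hq) e_diff
      (by rwa [e.right_inv hq]) (0, h q)
    rw [(he _ (e.map_target hq)).2.2, e.right_inv hq] at symm_apply
    rw [symm_diff.hasFDerivAt.snd.fderiv]
    exact (congrArg Prod.snd symm_apply :)

/-- normal form for Euler vector fields, Proposition 2.5: if `X` is an
Euler vector field on an open set `U ⊆ ℝ^d × ℝ^d` and `p ∈ Δ ∩ U`, there exist an open
set `V` with `p ∈ V ⊆ U` and a smooth map `htil : V → ℝ^d` such that (i) `Ψ(x₁,x₂) =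
(x₁, htil(x₁,x₂))` is a smooth diffeomorphism of `V` onto an open set, (ii) `Δ ∩ V = {htil = 0}`,
and (iii) `X htil = htil` on `V`, i.e. `D htil(q)(X(q)) = htil(q)`. -/
theorem euler_normal_form {d : ℕ} {X : Pt d → Pt d} {U : Set (Pt d)}
    (hU : IsOpen U) (hX : IsEulerVF X U) (p : Pt d) (hp : p ∈ Diag d ∩ U) :
    ∃ (V : Set (Pt d)) (htil : Pt d → EuclideanSpace ℝ (Fin d)),
      IsOpen V ∧ p ∈ V ∧ V ⊆ U ∧
      ContDiffOn ℝ (⊤ : ℕ∞) htil V ∧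
      Set.InjOn (fun q : Pt d => (q.1, htil q)) V ∧
      IsOpen ((fun q : Pt d => (q.1, htil q)) '' V) ∧
      (∃ Ψinv : Pt d → Pt d,
        ContDiffOn ℝ (⊤ : ℕ∞) Ψinv ((fun q : Pt d => (q.1, htil q)) '' V) ∧
        ∀ q ∈ V, Ψinv (q.1, htil q) = q) ∧
      (∀ q ∈ V, (q ∈ Diag d ↔ htil q = 0)) ∧
      (∀ q ∈ V, fderiv ℝ htil q (X q) = htil q) := by
  obtain ⟨x₀, rfl⟩ : ∃ x₀, p = (x₀, x₀) := ⟨p.1, Prod.ext rfl hp.1.symm⟩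
  exact euler_normal_form_general hU hX.smooth hX.fiber (fun _ => hX.apply_diag)
    (fun _ => hX.fderiv_diag hU) hp.2
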